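/- Let X be a finite poset and x ∈ X. Let 𝒞 be the poset, ordered by inclusion, of finite nonempty chains (totally ordered subsets) of X that contain x; let L be the poset, ordered by inclusion, of all (possibly empty) chains of {z ∈ X : z < x}; and let U be the poset, ordered by inclusion, of all (possibly empty) chains of {z ∈ X : x < z}. Then the map sending a chain s to the pair (s ∩ {z : z < x}, s ∩ {z : x < z}) is an order isomorphism from 𝒞 onto the product poset L × U (with the componentwise order). -/

import Mathlib

/-!
Every element other than `x` of a chain through `x` is comparable to `x`, hence lies strictly below
or strictly above it, so the chain is recovered from its two parts by gluing them along `x`.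
Conversely, by transitivity through `x`, any chain below `x` and any chain above `x` glue to a
chain. Both operations preserve inclusion.
-/

open Set

section Gluing

variable {X : Type*} {x : X} {a b c : Set X}

theorem isChain_insert_union [Preorder X] (ha : IsChain (· ≤ ·) a) (hb : IsChain (· ≤ ·) b)
    (hax : a ⊆ Iic x) (hbx : b ⊆ Ici x) : IsChain (· ≤ ·) (insert x (a ∪ b)) := by
  have hab : IsChain (· ≤ ·) (a ∪ b) :=
    isChain_union.2 ⟨ha, hb, fun _ hy _ hz _ => Or.inl ((hax hy).trans (hbx hz))⟩
  exact hab.insert fun _ hy _ => hy.elim (fun hy => Or.inr (hax hy)) fun hy => Or.inl (hbx hy)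

theorem insert_union_inter_Iio [Preorder X] (ha : a ⊆ Iio x) (hb : b ⊆ Ici x) :
    insert x (a ∪ b) ∩ Iio x = a := by
  have hdisj : b ∩ Iio x = ∅ := (Iio_disjoint_Ici le_rfl).symm.mono_left hb |>.inter_eq
  rw [insert_inter_of_notMem self_notMem_Iio, union_inter_distrib_right,
    inter_eq_left.2 ha, hdisj, union_empty]

theorem insert_union_inter_Ioi [Preorder X] (ha : a ⊆ Iic x) (hb : b ⊆ Ioi x) :
    insert x (a ∪ b) ∩ Ioi x = b := by
  rw [union_comm]
  exact insert_union_inter_Iio (X := Xᵒᵈ) hb ha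

theorem insert_inter_Iio_union_inter_Ioi [PartialOrder X] (hc : IsChain (· ≤ ·) c) (hx : x ∈ c) :
    insert x (c ∩ Iio x ∪ c ∩ Ioi x) = c := by
  have hsub : c ⊆ insert x (Iio x ∪ Ioi x) := fun z hz => by
    obtain rfl | hne := eq_or_ne z x
    · exact mem_insert _ _
    · exact Or.inr ((hc hz hx hne).imp hne.lt_of_le hne.lt_of_le')
  rw [← inter_union_distrib_left, insert_inter_distrib, insert_eq_of_mem hx, inter_eq_left.2 hsub]

end Gluing

/-- The poset of chains of `X` containing `x`, ordered by inclusion. -/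
abbrev ChainThrough {X : Type*} [LE X] (x : X) : Type _ :=
  {c : Set X // IsChain (· ≤ ·) c ∧ x ∈ c}

/-- The poset of possibly empty chains of `X` contained in `s`, ordered by inclusion. -/
abbrev ChainIn {X : Type*} [LE X] (s : Set X) : Type _ :=
  {c : Set X // IsChain (· ≤ ·) c ∧ c ⊆ s}

/-- The splitting of chains through `x` into their parts strictly below and strictly above `x`,
with inverse the gluing `(a, b) ↦ {x} ∪ a ∪ b`. -/
def chainThroughEquiv {X : Type*} [PartialOrder X] (x : X) :
    ChainThrough x ≃ ChainIn (Iio x) × ChainIn (Ioi x) where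
  toFun c :=
    (⟨c ∩ Iio x, c.2.1.mono inter_subset_left, inter_subset_right⟩,
      ⟨c ∩ Ioi x, c.2.1.mono inter_subset_left, inter_subset_right⟩)
  invFun p :=
    ⟨insert x (p.1 ∪ p.2),
      isChain_insert_union p.1.2.1 p.2.2.1 (p.1.2.2.trans Iio_subset_Iic_self)
        (p.2.2.2.trans Ioi_subset_Ici_self),
      mem_insert _ _⟩
  left_inv c := Subtype.ext (insert_inter_Iio_union_inter_Ioi c.2.1 c.2.2)
  right_inv p := Prod.ext
    (Subtype.ext (insert_union_inter_Iio p.1.2.2 (p.2.2.2.trans Ioi_subset_Ici_self)))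
    (Subtype.ext (insert_union_inter_Ioi (p.1.2.2.trans Iio_subset_Iic_self) p.2.2.2))

theorem monotone_chainThroughEquiv {X : Type*} [PartialOrder X] (x : X) :
    Monotone (chainThroughEquiv x) := fun _ _ h =>
  ⟨inter_subset_inter_left _ h, inter_subset_inter_left _ h⟩

theorem monotone_chainThroughEquiv_symm {X : Type*} [PartialOrder X] (x : X) :
    Monotone (chainThroughEquiv x).symm := fun _ _ h =>
  insert_subset_insert (union_subset_union h.1 h.2)

theorem statement14_general (X : Type*) [PartialOrder X] (x : X) :
    ∃ e : {c : Set X // IsChain (· ≤ ·) c ∧ x ∈ c} ≃o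
        ({c : Set X // IsChain (· ≤ ·) c ∧ c ⊆ {z : X | z < x}} ×
          {c : Set X // IsChain (· ≤ ·) c ∧ c ⊆ {z : X | x < z}}),
      ∀ c : {c : Set X // IsChain (· ≤ ·) c ∧ x ∈ c},
        ((e c).1 : Set X) = (c : Set X) ∩ {z : X | z < x} ∧
        ((e c).2 : Set X) = (c : Set X) ∩ {z : X | x < z} :=
  ⟨(chainThroughEquiv x).toOrderIso (monotone_chainThroughEquiv x)
    (monotone_chainThroughEquiv_symm x), fun _ => ⟨rfl, rfl⟩⟩

/-- Let `X` be a finite poset and `x ∈ X`.  The map sending a chain `s`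
containing `x` to the pair `(s ∩ {z < x}, s ∩ {z > x})` is an order isomorphism from the poset
of (finite) nonempty chains of `X` containing `x` (ordered by inclusion) onto the product of
the poset of chains of `{z < x}` and the poset of chains of `{z > x}` (both possibly empty,
ordered by inclusion, product with the componentwise order). -/
theorem statement14 (X : Type) [PartialOrder X] [Finite X] (x : X) :
    ∃ e : {c : Set X // IsChain (· ≤ ·) c ∧ x ∈ c} ≃o
        ({c : Set X // IsChain (· ≤ ·) c ∧ c ⊆ {z : X | z < x}} ×
          {c : Set X // IsChain (· ≤ ·) c ∧ c ⊆ {z : X | x < z}}),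
      ∀ c : {c : Set X // IsChain (· ≤ ·) c ∧ x ∈ c},
        ((e c).1 : Set X) = (c : Set X) ∩ {z : X | z < x} ∧
        ((e c).2 : Set X) = (c : Set X) ∩ {z : X | x < z} :=
  statement14_general X x
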